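/- For every δ with 0 < δ ≤ 1, every real number q > −1/2, and every t ≥ 0, ( δ / √(1 + δ·log(1+t)) ) · ∫_1^{1+log(1+t)} x^q / √(1 + δ(x−1)) dx ≤ (1 + log(1+t))^q / (q + 1/2). Here log denotes the natural logarithm. -/

import Mathlib

open Real intervalIntegral

/-- For `0 < δ ≤ 1`, `q > -1/2`, `t ≥ 0`:
`(δ/√(1+δ log(1+t))) ∫_1^{1+log(1+t)} x^q / √(1+δ(x-1)) dx ≤ (1+log(1+t))^q / (q+1/2)`. -/
theorem I_q_delta_product_bound (δ : ℝ) (hδ0 : 0 < δ) (hδ1 : δ ≤ 1)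
    (q : ℝ) (hq : -(1 / 2) < q) (t : ℝ) (ht : 0 ≤ t) :
    (δ / Real.sqrt (1 + δ * Real.log (1 + t))) *
        ∫ x in (1 : ℝ)..(1 + Real.log (1 + t)), x ^ q / Real.sqrt (1 + δ * (x - 1))
      ≤ (1 + Real.log (1 + t)) ^ q / (q + 1 / 2) := by
  have hl : 0 ≤ Real.log (1 + t) := Real.log_nonneg (by linarith)
  generalize Real.log (1 + t) = l at hl
  have hL : (0 : ℝ) < 1 + l := by linarith
  have hL1 : (1 : ℝ) ≤ 1 + l := by linarith
  have hq2 : 0 < q + 1 / 2 := by linarith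
  have hsd : 0 < Real.sqrt δ := Real.sqrt_pos.mpr hδ0
  have hsL : 0 < Real.sqrt (1 + l) := Real.sqrt_pos.mpr hL
  have key : ∀ x : ℝ, 1 ≤ x → Real.sqrt δ * Real.sqrt x ≤ Real.sqrt (1 + δ * (x - 1)) := by
    intro x hx
    rw [← Real.sqrt_mul hδ0.le]
    exact Real.sqrt_le_sqrt (by nlinarith)
  have hint : ∫ x in (1 : ℝ)..(1 + l), x ^ q / Real.sqrt (1 + δ * (x - 1))
      ≤ ∫ x in (1 : ℝ)..(1 + l), (Real.sqrt δ)⁻¹ * x ^ (q - 1 / 2) := by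
    apply intervalIntegral.integral_mono_on hL1
    · apply ContinuousOn.intervalIntegrable
      rw [Set.uIcc_of_le hL1]
      apply ContinuousOn.div
      · intro x hx
        exact (Real.continuousAt_rpow_const x q
          (Or.inl (by have := hx.1; linarith))).continuousWithinAt
      · fun_prop
      · intro x hx
        have h1 : 0 < Real.sqrt x := Real.sqrt_pos.mpr (by linarith [hx.1])
        have := key x hx.1
        have := mul_pos hsd h1
        linarith
    · exact (intervalIntegral.intervalIntegrable_rpow' (by linarith)).const_mul _
    · intro x hx
      have hx0 : 0 < x := by linarith [hx.1]
      have h1 : 0 < Real.sqrt x := Real.sqrt_pos.mpr hx0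
      calc x ^ q / Real.sqrt (1 + δ * (x - 1)) ≤ x ^ q / (Real.sqrt δ * Real.sqrt x) :=
            div_le_div_of_nonneg_left (Real.rpow_nonneg hx0.le _) (mul_pos hsd h1) (key x hx.1)
        _ = (Real.sqrt δ)⁻¹ * x ^ (q - 1 / 2) := by
            rw [Real.rpow_sub hx0, ← Real.sqrt_eq_rpow]
            field_simp
  have hval : ∫ x in (1 : ℝ)..(1 + l), (Real.sqrt δ)⁻¹ * x ^ (q - 1 / 2)
      ≤ (Real.sqrt δ)⁻¹ * ((1 + l) ^ q * Real.sqrt (1 + l) / (q + 1 / 2)) := by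
    rw [intervalIntegral.integral_const_mul, integral_rpow (Or.inl (by linarith))]
    have e : q - 1 / 2 + 1 = q + 1 / 2 := by ring
    rw [e, Real.rpow_add hL, ← Real.sqrt_eq_rpow, Real.one_rpow]
    gcongr
    linarith
  have hk := key (1 + l) hL1
  rw [add_sub_cancel_left] at hk
  have hb : δ / Real.sqrt (1 + δ * l) ≤ δ / (Real.sqrt δ * Real.sqrt (1 + l)) :=
    div_le_div_of_nonneg_left hδ0.le (mul_pos hsd hsL) hk
  calc _ ≤ δ / Real.sqrt (1 + δ * l) *
        ((Real.sqrt δ)⁻¹ * ((1 + l) ^ q * Real.sqrt (1 + l) / (q + 1 / 2))) :=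
        mul_le_mul_of_nonneg_left (hint.trans hval) (by positivity)
    _ ≤ δ / (Real.sqrt δ * Real.sqrt (1 + l)) *
        ((Real.sqrt δ)⁻¹ * ((1 + l) ^ q * Real.sqrt (1 + l) / (q + 1 / 2))) :=
        mul_le_mul_of_nonneg_right hb (by positivity)
    _ = (δ / (Real.sqrt δ * Real.sqrt δ)) * (Real.sqrt (1 + l) / Real.sqrt (1 + l)) *
        ((1 + l) ^ q / (q + 1 / 2)) := by
        simp only [div_eq_mul_inv, mul_inv]
        ring
    _ = _ := by
        rw [Real.mul_self_sqrt hδ0.le, div_self hδ0.ne', div_self hsL.ne']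
        ring
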